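/- In the ring T = ℂ[[x,y,z]]/(x² − yz), the ideal Q generated by the images of x and y is a prime ideal, the quotient T/Q is isomorphic to the power series ring ℂ[[z]], and Q is not a principal ideal of T. -/

import Mathlib

/-!
Setting `x = y = 0` is a surjective homomorphism `ℂ[[x,y,z]] → ℂ[[z]]` that kills `x² − yz`. Its
kernel is `(x, y)`: a power series without pure powers of `z` is the sum of its terms divisible by
`x` and of terms divisible by `y` only. Hence `T/Q ≅ ℂ[[z]]`, a domain, so `Q` is prime.

If `Q` were generated by the class of `g`, then `g` would have zero constant term. As `x² − yz` has
no linear part, the linear parts of `x` and `y` would then both be scalar multiples of the linear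
part of `g`, contradicting their linear independence.
-/

noncomputable section

/-- The ring `T = ℂ[[x,y,z]]/(x² − yz)`. -/
abbrev QuadricQuotient : Type :=
  MvPowerSeries (Fin 3) ℂ ⧸
    Ideal.span {(MvPowerSeries.X (0 : Fin 3) : MvPowerSeries (Fin 3) ℂ) ^ 2 -
      MvPowerSeries.X (1 : Fin 3) * MvPowerSeries.X (2 : Fin 3)}

/-- The ideal `Q = (x, y)` of `T`, generated by the images of `x` and `y`. -/
def quadricQ : Ideal QuadricQuotient :=
  Ideal.span
    {Ideal.Quotient.mk _ (MvPowerSeries.X (0 : Fin 3) : MvPowerSeries (Fin 3) ℂ),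
     Ideal.Quotient.mk _ (MvPowerSeries.X (1 : Fin 3) : MvPowerSeries (Fin 3) ℂ)}

open MvPowerSeries in
/-- The homomorphism `ℂ[[x,y,z]] → ℂ[[z]]` setting `x = y = 0`. -/
def evalXY : MvPowerSeries (Fin 3) ℂ →+* PowerSeries ℂ :=
  (killCompl (R := ℂ) (⟨fun _ ↦ 2, fun _ _ _ ↦ rfl⟩ : Unit ↪ Fin 3)).toRingHom

theorem coeff_evalXY (f : MvPowerSeries (Fin 3) ℂ) (n : ℕ) :
    PowerSeries.coeff n (evalXY f) = MvPowerSeries.coeff (Finsupp.single 2 n) f := by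
  unfold evalXY PowerSeries.coeff
  refine (MvPowerSeries.coeff_killCompl _ _).trans ?_
  rw [Finsupp.embDomain_single]
  rfl

theorem evalXY_X_zero : evalXY (MvPowerSeries.X 0) = 0 :=
  MvPowerSeries.killCompl_X_eq_zero (by rintro ⟨_, h⟩; exact absurd (show (2 : Fin 3) = 0 from h) (by decide))

theorem evalXY_X_one : evalXY (MvPowerSeries.X 1) = 0 :=
  MvPowerSeries.killCompl_X_eq_zero (by rintro ⟨_, h⟩; exact absurd (show (2 : Fin 3) = 1 from h) (by decide))

theorem evalXY_surjective : Function.Surjective evalXY := fun p ↦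
  ⟨MvPowerSeries.rename _ p, MvPowerSeries.killCompl_rename_app _⟩

theorem exists_of_evalXY_eq_zero {f : MvPowerSeries (Fin 3) ℂ} (hf : evalXY f = 0) :
    ∃ a b, f = MvPowerSeries.X 0 * a + MvPowerSeries.X 1 * b := by
  -- `g` collects the terms of `f` that are free of `x`.
  let g : MvPowerSeries (Fin 3) ℂ := fun n ↦ if n 0 = 0 then MvPowerSeries.coeff n f else 0
  have hg (n) : MvPowerSeries.coeff n g = if n 0 = 0 then MvPowerSeries.coeff n f else 0 := rfl
  have h0 : MvPowerSeries.X 0 ∣ f - g := by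
    rw [MvPowerSeries.X_dvd_iff]
    intro n hn
    simp [hg, hn]
  have h1 : MvPowerSeries.X 1 ∣ g := by
    rw [MvPowerSeries.X_dvd_iff]
    intro n hn
    rw [hg]
    split_ifs with hn0
    · have : n = Finsupp.single 2 (n 2) := by
        ext i
        fin_cases i <;> simp [hn, hn0]
      rw [this, ← coeff_evalXY, hf, map_zero]
    · rfl
  obtain ⟨a, ha⟩ := h0
  obtain ⟨b, hb⟩ := h1
  exact ⟨a, b, by rw [← ha, ← hb]; ring⟩

/-- The homomorphism `T → ℂ[[z]]` induced by setting `x = y = 0`. -/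
def quadricEval : QuadricQuotient →+* PowerSeries ℂ :=
  Ideal.Quotient.lift _ evalXY (by
    intro a ha
    obtain ⟨r, rfl⟩ := Ideal.mem_span_singleton.1 ha
    simp [evalXY_X_zero, evalXY_X_one])

theorem quadricEval_mk (f : MvPowerSeries (Fin 3) ℂ) :
    quadricEval (Ideal.Quotient.mk _ f) = evalXY f := rfl

theorem ker_quadricEval : RingHom.ker quadricEval = quadricQ := by
  apply le_antisymm
  · intro t ht
    obtain ⟨f, rfl⟩ := Ideal.Quotient.mk_surjective t
    rw [RingHom.mem_ker, quadricEval_mk] at ht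
    obtain ⟨a, b, rfl⟩ := exists_of_evalXY_eq_zero ht
    rw [map_add, map_mul, map_mul]
    exact add_mem (Ideal.mul_mem_right _ _ (Ideal.subset_span (by simp)))
      (Ideal.mul_mem_right _ _ (Ideal.subset_span (by simp)))
  · refine Ideal.span_le.2 ?_
    rintro _ (rfl | rfl)
    · exact evalXY_X_zero
    · exact evalXY_X_one

theorem quadricEval_surjective : Function.Surjective quadricEval := fun p ↦ by
  obtain ⟨f, rfl⟩ := evalXY_surjective p
  exact ⟨_, quadricEval_mk f⟩

theorem coeff_single_one_mul (i : Fin 3) (f g : MvPowerSeries (Fin 3) ℂ) :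
    MvPowerSeries.coeff (Finsupp.single i 1) (f * g) =
      MvPowerSeries.constantCoeff f * MvPowerSeries.coeff (Finsupp.single i 1) g +
      MvPowerSeries.coeff (Finsupp.single i 1) f * MvPowerSeries.constantCoeff g := by
  rw [MvPowerSeries.coeff_mul, Finsupp.antidiagonal_single, Finset.sum_map]
  simp [Finset.Nat.antidiagonal_succ]

/-- Modulo `x² − yz`, which has order two, a multiple of a power series `g` without constant term
has linear part proportional to that of `g`. -/
theorem exists_linear_part_eq {f g : MvPowerSeries (Fin 3) ℂ}
    (hg : MvPowerSeries.constantCoeff g = 0)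
    (h : (Ideal.Quotient.mk _ f : QuadricQuotient) ∈
      Ideal.span {(Ideal.Quotient.mk _ g : QuadricQuotient)}) :
    ∃ c : ℂ, ∀ i : Fin 3, MvPowerSeries.coeff (Finsupp.single i 1) f =
      c * MvPowerSeries.coeff (Finsupp.single i 1) g := by
  obtain ⟨c, hc⟩ := Ideal.mem_span_singleton.1 h
  obtain ⟨c, rfl⟩ := Ideal.Quotient.mk_surjective c
  rw [← map_mul, Ideal.Quotient.eq] at hc
  obtain ⟨r, hr⟩ := Ideal.mem_span_singleton.1 hc
  refine ⟨MvPowerSeries.constantCoeff c, fun i ↦ ?_⟩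
  rw [sub_eq_iff_eq_add.1 hr, map_add, coeff_single_one_mul, coeff_single_one_mul, map_sub, map_sub,
    pow_two, coeff_single_one_mul, coeff_single_one_mul]
  simp [hg, mul_comm]

/-- In `T = ℂ[[x,y,z]]/(x² − yz)`, the ideal `Q = (x, y)` is prime, the quotient
`T/Q` is isomorphic to the power series ring `ℂ[[z]]`, and `Q` is not principal. -/
theorem quadricQ_prime_quotient_powerSeries_not_principal :
    quadricQ.IsPrime ∧
      Nonempty ((QuadricQuotient ⧸ quadricQ) ≃+* PowerSeries ℂ) ∧
      ¬ quadricQ.IsPrincipal := by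
  have e := (Ideal.quotEquivOfEq ker_quadricEval.symm).trans
    (RingHom.quotientKerEquivOfSurjective quadricEval_surjective)
  have hp := RingHom.ker_isPrime quadricEval
  rw [ker_quadricEval] at hp
  refine ⟨hp, ⟨e⟩, ?_⟩
  rintro ⟨t, ht⟩
  obtain ⟨g, rfl⟩ := Ideal.Quotient.mk_surjective t
  rw [← Ideal.span] at ht
  have hg : MvPowerSeries.constantCoeff g = 0 := by
    have hmem : Ideal.Quotient.mk _ g ∈ quadricQ := ht ▸ Ideal.mem_span_singleton_self _
    rw [← ker_quadricEval, RingHom.mem_ker, quadricEval_mk] at hmem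
    have := coeff_evalXY g 0
    rw [hmem] at this
    simpa using this.symm
  obtain ⟨a, ha⟩ := exists_linear_part_eq (f := MvPowerSeries.X 0) hg
    (ht ▸ Ideal.subset_span (by simp))
  obtain ⟨b, hb⟩ := exists_linear_part_eq (f := MvPowerSeries.X 1) hg
    (ht ▸ Ideal.subset_span (by simp))
  have ha0 := ha 0
  have ha1 := ha 1
  have hb1 := hb 1
  -- `a ≠ 0` because `x` has `x`-coefficient one; then `g` has no `y`-term, whereas `y` has one.
  simp [MvPowerSeries.coeff_index_single_X] at ha0 ha1 hb1
  rcases ha1 with h | h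
  · simp [h] at ha0
  · simp [h] at hb1

end
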